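/- Let M be a λ-term. If there exist a rigid term a ∈ T_r(M) and m ∈ ℕ such that H_r^m(a) is a head-normal form different from 0, then H^m(M) is a head-normal form (so M is head-normalizable). -/

import Mathlib

/-! Ordinary λ-terms, in de Bruijn notation. -/
inductive Lam : Type
  | var : ℕ → Lam
  | lam : Lam → Lam
  | app : Lam → Lam → Lam
  deriving DecidableEq

namespace Lam

/-- Shift the free indices `≥ d` up by one. -/
def lift (d : ℕ) : Lam → Lam
  | var n => if n < d then var n else var (n + 1)
  | lam M => lam (lift (d + 1) M)
  | app P Q => app (lift d P) (lift d Q)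

/-- Capture-avoiding substitution of `N` for the free variable `k`. -/
def subst : Lam → ℕ → Lam → Lam
  | var n, k, N => if n = k then N else if k < n then var (n - 1) else var n
  | lam M, k, N => lam (subst M (k + 1) (lift 0 N))
  | app P Q, k, N => app (subst P k N) (subst Q k N)

/-- Number of free occurrences of the variable `k`. -/
def count (k : ℕ) : Lam → ℕ
  | var n => if n = k then 1 else 0
  | lam M => count (k + 1) M
  | app P Q => count k P + count k Q

/-- One-step β-reduction. -/
inductive Beta : Lam → Lam → Prop
  | beta (M N : Lam) : Beta (app (lam M) N) (subst M 0 N)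
  | lam {M M'} : Beta M M' → Beta (lam M) (lam M')
  | appL {P P' Q} : Beta P P' → Beta (app P Q) (app P' Q)
  | appR {P Q Q'} : Beta Q Q' → Beta (app P Q) (app P Q')

/-- The head of the application spine is a variable, with no λ on the spine. -/
def neutral : Lam → Bool
  | var _ => true
  | lam _ => false
  | app P _ => neutral P

/-- Head-normal forms: `λx₁…λxₘ. x N₁ … Nₙ`. -/
def isHNF : Lam → Prop
  | var _ => True
  | lam M => isHNF M
  | app P _ => neutral P = true

/-- The head-reduction function `H`: contracts the head redex, identity on head-normal
forms. -/
def H : Lam → Lam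
  | var n => var n
  | lam M => lam (H M)
  | app (lam P) Q => subst P 0 Q
  | app (var n) Q => app (var n) Q
  | app (app P₁ P₂) Q => app (H (app P₁ P₂)) Q

/-- The left-parallel reduction function `L`: identity on β-normal forms, propagated to
the arguments on head-normal forms, contraction of the head redex otherwise. -/
def L : Lam → Lam
  | var n => var n
  | lam M => lam (L M)
  | app (lam P) Q => subst P 0 Q
  | app (var n) Q => app (var n) (L Q)
  | app (app P₁ P₂) Q =>
      if neutral (app P₁ P₂) then app (L (app P₁ P₂)) (L Q)
      else app (L (app P₁ P₂)) Q

/-- Iterated application `M N₁ … Nₙ`. -/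
def mkApps (M : Lam) (Ns : List Lam) : Lam := Ns.foldl app M

/-- All free variables are `< d`. -/
def ClosedAt (d : ℕ) : Lam → Prop
  | var n => n < d
  | lam M => ClosedAt (d + 1) M
  | app P Q => ClosedAt d P ∧ ClosedAt d Q

/-- `M` is head-normalizable: it β-reduces in finitely many steps to a head-normal form. -/
def HeadNormalizable (M : Lam) : Prop :=
  ∃ N, Relation.ReflTransGen Beta M N ∧ isHNF N

/-- `M` is a β-normal form: it contains no β-redex, i.e. admits no β-step. -/
def BetaNF (M : Lam) : Prop := ¬∃ N, Beta M N

/-- `M` is β-normalizable: it β-reduces in finitely many steps to a β-normal form. -/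
def BetaNormalizable (M : Lam) : Prop :=
  ∃ N, Relation.ReflTransGen Beta M N ∧ BetaNF N

/-- `M` is strongly β-normalizable: no infinite β-reduction sequence starts from `M`. -/
def StronglyNormalizable (M : Lam) : Prop := Acc (fun N M' => Beta M' N) M

end Lam

/-! Rigid resource terms (the nonzero ones), in de Bruijn notation:
`a ::= x | λx.a | ⟨c⟩d⃗` with `d⃗` a list of rigid terms.
The term `0` is represented by `none : Option Rig`. -/
inductive Rig : Type
  | var : ℕ → Rig
  | lam : Rig → Rig
  | app : Rig → List Rig → Rig

namespace Rig

mutual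
/-- Number of free occurrences of the variable `k` in a rigid term. -/
def countR (k : ℕ) : Rig → ℕ
  | var n => if n = k then 1 else 0
  | lam a => countR (k + 1) a
  | app c ds => countR k c + countRList k ds
termination_by a => sizeOf a

def countRList (k : ℕ) : List Rig → ℕ
  | [] => 0
  | d :: ds => countR k d + countRList k ds
termination_by ds => sizeOf ds
end

mutual
/-- Shift the free indices `≥ d` up by one. -/
def liftR (d : ℕ) : Rig → Rig
  | var n => if n < d then var n else var (n + 1)
  | lam a => lam (liftR (d + 1) a)
  | app c ds => app (liftR d c) (liftRList d ds)
termination_by a => sizeOf a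

def liftRList (d : ℕ) : List Rig → List Rig
  | [] => []
  | a :: as => liftR d a :: liftRList d as
termination_by as => sizeOf as
end

mutual
/-- Rigid substitution `a[b⃗/k]`: the list `b⃗` is distributed, in order, over the
free occurrences of the variable `k`; the result is `none` (i.e. `0`) when
`|b⃗| ≠ n_k(a)`. -/
def rsubst (k : ℕ) : Rig → List Rig → Option Rig
  | var n, bs =>
      if n = k then (match bs with | [b] => some b | _ => none)
      else (match bs with
            | [] => some (if k < n then var (n - 1) else var n)
            | _ => none)
  | lam a, bs => (rsubst (k + 1) a (liftRList 0 bs)).map lam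
  | app c ds, bs =>
      match rsubst k c (bs.take (countR k c)), rsubstList k ds (bs.drop (countR k c)) with
      | some c', some ds' => some (app c' ds')
      | _, _ => none
termination_by a _ => sizeOf a

def rsubstList (k : ℕ) : List Rig → List Rig → Option (List Rig)
  | [], bs => if bs.isEmpty then some [] else none
  | d :: ds, bs =>
      match rsubst k d (bs.take (countR k d)), rsubstList k ds (bs.drop (countR k d)) with
      | some d', some ds' => some (d' :: ds')
      | _, _ => none
termination_by ds _ => sizeOf ds
end

/-- One-step rigid resource reduction `→_r` (contextual closure of
`⟨λx.a⟩b⃗ →_r a[b⃗/x]`); the result may be `0` (i.e. `none`), which annihilates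
the surrounding context. -/
inductive RStep : Rig → Option Rig → Prop
  | beta (a : Rig) (bs : List Rig) : RStep (app (lam a) bs) (rsubst 0 a bs)
  | lam {a r} : RStep a r → RStep (lam a) (r.map lam)
  | head {c r} (ds : List Rig) : RStep c r → RStep (app c ds) (r.map (fun c' => app c' ds))
  | arg {d r} (c : Rig) (ds₁ ds₂ : List Rig) :
      RStep d r → RStep (app c (ds₁ ++ d :: ds₂)) (r.map (fun d' => app c (ds₁ ++ d' :: ds₂)))

/-- `→_r` on rigid terms extended with `0`; `0` is inert. -/
inductive RStepO : Option Rig → Option Rig → Prop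
  | mk {a r} : RStep a r → RStepO (some a) r

/-- `r` is a `→_r`-normal form (`0` is one). -/
def RNormal (r : Option Rig) : Prop := ¬∃ r', RStepO r r'

/-- The head of the application spine is a variable, with no λ on the spine. -/
def rNeutral : Rig → Bool
  | var _ => true
  | lam _ => false
  | app c _ => rNeutral c

/-- Rigid head-normal forms among nonzero terms: `λx₁…λxₘ.⟨…⟨x⟩d⃗₁…⟩d⃗ₙ`
(the term `0` is a head-normal form, but it is treated separately). -/
def rIsHNF : Rig → Prop
  | var _ => True
  | lam a => rIsHNF a
  | app c _ => rNeutral c = true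

/-- The rigid head-reduction function `H_r`: contracts the head redex, identity on
head-normal forms; the result may be `0` (i.e. `none`). -/
def Hr : Rig → Option Rig
  | var n => some (var n)
  | lam a => (Hr a).map lam
  | app (lam a) bs => rsubst 0 a bs
  | app (var n) ds => some (app (var n) ds)
  | app (app c₁ c₂) ds => (Hr (app c₁ c₂)).map (fun c' => app c' ds)

/-- `H_r` extended to terms-or-`0`. -/
def HrO : Option Rig → Option Rig := fun r => r.bind Hr

mutual
/-- The rigid left-parallel reduction function `L_r`: identity on `→_r`-normal forms,
applied componentwise to the argument lists on head-normal forms, contraction of the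
head redex otherwise; the result may be `0` (i.e. `none`). -/
def Lr : Rig → Option Rig
  | var n => some (var n)
  | lam a => (Lr a).map lam
  | app (lam a) bs => rsubst 0 a bs
  | app (var n) ds => (LrList ds).map (fun ds' => app (var n) ds')
  | app (app c₁ c₂) ds =>
      if rNeutral (app c₁ c₂) then
        match Lr (app c₁ c₂), LrList ds with
        | some c', some ds' => some (app c' ds')
        | _, _ => none
      else (Lr (app c₁ c₂)).map (fun c' => app c' ds)
termination_by a => sizeOf a

def LrList : List Rig → Option (List Rig)
  | [] => some []
  | d :: ds =>
      match Lr d, LrList ds with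
      | some d', some ds' => some (d' :: ds')
      | _, _ => none
termination_by ds => sizeOf ds
end

/-- `L_r` extended to terms-or-`0`. -/
def LrO : Option Rig → Option Rig := fun r => r.bind Lr

/-- Positive resource terms: no empty list/multiset occurs as the argument of an
application. -/
inductive rPositive : Rig → Prop
  | var (n : ℕ) : rPositive (var n)
  | lam {a} : rPositive a → rPositive (lam a)
  | app {c : Rig} {ds : List Rig} :
      rPositive c → ds ≠ [] → (∀ d ∈ ds, rPositive d) → rPositive (app c ds)

end Rig

/-- The rigid expansion `T_r(M)` of a λ-term (equivalently, the support of its Taylor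
expansion, with multisets presented by lists: `Texp M` is closed under permutation of
argument lists). -/
def Texp : Lam → Set Rig
  | Lam.var n => {Rig.var n}
  | Lam.lam M => {a | ∃ b ∈ Texp M, a = Rig.lam b}
  | Lam.app P Q => {a | ∃ c ∈ Texp P, ∃ ds : List Rig, (∀ d ∈ ds, d ∈ Texp Q) ∧ a = Rig.app c ds}

namespace Rig

/-- The support of the `n`-linear substitution `∂_k a · b̄`, where the multiset `b̄` is
presented by the list `bs`: the finite formal sum (multiset) of all nonzero results of
rigid substitutions along bijective assignments, i.e. permutations of `bs`. -/
def permSubst (k : ℕ) (a : Rig) (bs : List Rig) : Multiset Rig :=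
  ↑(bs.permutations.filterMap (fun bs' => rsubst k a bs'))

/-- One step of non-erasing ε-resource reduction `→^{¬e}_{∂ε}` out of a single resource
term, producing a finite formal sum (a multiset) of resource terms: non-erasing resource
β-steps `⟨λx.a⟩b̄ → ∂_x a · b̄` (with `x ∈ FV(a)`) and resource σ₁-steps, under any
context. -/
inductive NEStep : Rig → Multiset Rig → Prop
  | beta {a : Rig} (bs : List Rig) :
      0 < countR 0 a → NEStep (app (lam a) bs) (permSubst 0 a bs)
  | sigma (a : Rig) (ts qs : List Rig) :
      NEStep (app (app (lam a) ts) qs) {app (lam (app a (liftRList 0 qs))) ts}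
  | lam {a σ} : NEStep a σ → NEStep (lam a) (σ.map lam)
  | head {c σ} (ds : List Rig) : NEStep c σ → NEStep (app c ds) (σ.map (fun c' => app c' ds))
  | arg {d σ} (c : Rig) (ds₁ ds₂ : List Rig) :
      NEStep d σ → NEStep (app c (ds₁ ++ d :: ds₂)) (σ.map (fun d' => app c (ds₁ ++ d' :: ds₂)))

/-- Non-erasing ε-resource reduction on finite formal sums, extended by linearity. -/
def NEStepSum (σ τ : Multiset Rig) : Prop :=
  ∃ (a : Rig) (ρ υ : Multiset Rig), σ = a ::ₘ ρ ∧ NEStep a υ ∧ τ = υ + ρ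

/-- `σ` is a `→^{¬e}_{∂ε}`-normal form. -/
def NENormal (σ : Multiset Rig) : Prop := ¬∃ τ, NEStepSum σ τ

end Rig

/-- One step of non-erasing ε-reduction on λ-terms: non-erasing β-steps
`(λx.M)N → M[N/x]` (with `x ∈ FV(M)`) together with σ₁-steps
`((λx.M)N)P → (λx.MP)N` (`x ∉ FV(P)`), under any context. -/
inductive NEeps : Lam → Lam → Prop
  | beta {M : Lam} (N : Lam) :
      0 < Lam.count 0 M → NEeps (Lam.app (Lam.lam M) N) (Lam.subst M 0 N)
  | sigma (M N P : Lam) :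
      NEeps (Lam.app (Lam.app (Lam.lam M) N) P)
        (Lam.app (Lam.lam (Lam.app M (Lam.lift 0 P))) N)
  | lam {M M'} : NEeps M M' → NEeps (Lam.lam M) (Lam.lam M')
  | appL {P P' Q} : NEeps P P' → NEeps (Lam.app P Q) (Lam.app P' Q)
  | appR {P Q Q'} : NEeps Q Q' → NEeps (Lam.app P Q) (Lam.app P Q')

/-- The set `S` of λ-terms. -/
inductive SLam : Lam → Prop
  | varApp (n : ℕ) (Ms : List Lam) :
      (∀ M ∈ Ms, SLam M) → SLam (Lam.mkApps (Lam.var n) Ms)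
  | lam {M} : SLam M → SLam (Lam.lam M)
  | redex (M₀ M₁ : Lam) (Ms : List Lam) :
      SLam M₁ → SLam (Lam.mkApps (Lam.subst M₀ 0 M₁) Ms) →
      SLam (Lam.mkApps (Lam.app (Lam.lam M₀) M₁) Ms)

/-- λI-terms: every abstraction binds a variable occurring free in its body. -/
def LamI : Lam → Prop
  | Lam.var _ => True
  | Lam.lam M => LamI M ∧ 0 < Lam.count 0 M
  | Lam.app P Q => LamI P ∧ LamI Q

theorem aux_liftRList_eq (d : ℕ) (as : List Rig) :
    Rig.liftRList d as = as.map (Rig.liftR d) := by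
  induction as with
  | nil => simp [Rig.liftRList]
  | cons a as ih => simp [Rig.liftRList, ih]

theorem aux_lift_mem (M : Lam) : ∀ (d : ℕ) (a : Rig), a ∈ Texp M →
    Rig.liftR d a ∈ Texp (Lam.lift d M) := by
  induction M with
  | var n =>
    intro d a ha
    simp only [Texp, Set.mem_singleton_iff] at ha
    subst ha
    simp only [Rig.liftR, Lam.lift]
    split <;> simp [Texp]
  | lam M ih =>
    rintro d a ⟨b, hb, rfl⟩
    simp only [Rig.liftR, Lam.lift]
    exact ⟨_, ih _ _ hb, rfl⟩
  | app P Q ihP ihQ =>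
    rintro d a ⟨c, hc, ds, hds, rfl⟩
    simp only [Rig.liftR, Lam.lift, aux_liftRList_eq]
    refine ⟨_, ihP _ _ hc, _, ?_, rfl⟩
    intro x hx
    obtain ⟨y, hy, rfl⟩ := List.mem_map.1 hx
    exact ihQ _ _ (hds y hy)

theorem aux_rsubst_mem (M : Lam) : ∀ (N : Lam) (k : ℕ) (a : Rig) (bs : List Rig) (c : Rig),
    a ∈ Texp M → (∀ b ∈ bs, b ∈ Texp N) → Rig.rsubst k a bs = some c →
    c ∈ Texp (Lam.subst M k N) := by
  induction M with
  | var n =>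
    intro N k a bs c ha hbs h
    simp only [Texp, Set.mem_singleton_iff] at ha
    subst ha
    rw [Rig.rsubst.eq_def] at h
    simp only [Lam.subst]
    by_cases hn : n = k
    · simp only [if_pos hn] at h ⊢
      match bs, h with
      | [b], h =>
        simp only [Option.some.injEq] at h
        subst h
        exact hbs b (by simp)
    · simp only [if_neg hn] at h ⊢
      match bs, h with
      | [], h =>
        simp only [Option.some.injEq] at h
        subst h
        split <;> simp [Texp]
  | lam M ih =>
    rintro N k a bs c ⟨b, hb, rfl⟩ hbs h
    simp only [Rig.rsubst, Option.map_eq_some_iff] at h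
    obtain ⟨e, he, rfl⟩ := h
    refine ⟨e, ih _ _ _ _ _ hb ?_ he, rfl⟩
    intro x hx
    rw [aux_liftRList_eq] at hx
    obtain ⟨y, hy, rfl⟩ := List.mem_map.1 hx
    exact aux_lift_mem _ _ _ (hbs y hy)
  | app P Q ihP ihQ =>
    rintro N k a bs e ⟨c, hc, ds, hds, rfl⟩ hbs h
    simp only [Rig.rsubst] at h
    split at h
    · rename_i c' ds' hc' hds'
      simp only [Option.some.injEq] at h
      subst h
      refine ⟨c', ihP _ _ _ _ _ hc (fun b hb => hbs b (List.mem_of_mem_take hb)) hc',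
        ds', ?_, rfl⟩
      have hbs' : ∀ b ∈ bs.drop (Rig.countR k c), b ∈ Texp N :=
        fun b hb => hbs b (List.mem_of_mem_drop hb)
      clear hbs hc' hc
      generalize bs.drop (Rig.countR k c) = bs at hbs' hds'
      induction ds generalizing bs ds' with
      | nil =>
        simp only [Rig.rsubstList] at hds'
        split at hds'
        · simp only [Option.some.injEq] at hds'
          subst hds'
          simp
        · simp at hds'
      | cons d ds ih =>
        simp only [Rig.rsubstList] at hds'
        split at hds'
        · rename_i d₁ ds₁ h₁ h₂
          simp only [Option.some.injEq] at hds'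
          subst hds'
          intro x hx
          rcases List.mem_cons.1 hx with rfl | hx
          · exact ihQ _ _ _ _ _ (hds _ (by simp))
              (fun b hb => hbs' b (List.mem_of_mem_take hb)) h₁
          · exact ih (fun y hy => hds y (by simp [hy])) ds₁ _
              (fun b hb => hbs' b (List.mem_of_mem_drop hb)) h₂ x hx
        · simp at hds'
    · simp at h

theorem aux_Hr_mem (M : Lam) : ∀ (a c : Rig), a ∈ Texp M → Rig.Hr a = some c →
    c ∈ Texp (Lam.H M) := by
  induction M with
  | var n =>
    intro a c ha h
    simp only [Texp, Set.mem_singleton_iff] at ha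
    subst ha
    simp only [Rig.Hr, Option.some.injEq] at h
    subst h
    simp [Lam.H, Texp]
  | lam M ih =>
    rintro a c ⟨b, hb, rfl⟩ h
    simp only [Rig.Hr, Option.map_eq_some_iff] at h
    obtain ⟨e, he, rfl⟩ := h
    exact ⟨e, ih _ _ hb he, rfl⟩
  | app P Q ihP _ =>
    rintro a e ⟨c, hc, ds, hds, rfl⟩ h
    cases P with
    | var n =>
      have hc' := hc
      simp only [Texp, Set.mem_singleton_iff] at hc'
      subst hc'
      simp only [Rig.Hr, Option.some.injEq] at h
      subst h
      exact ⟨_, hc, ds, hds, rfl⟩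
    | lam P =>
      obtain ⟨b, hb, rfl⟩ := hc
      simp only [Rig.Hr] at h
      simp only [Lam.H]
      exact aux_rsubst_mem _ _ _ _ _ _ hb hds h
    | app P₁ P₂ =>
      have hc' := hc
      obtain ⟨c₁, hc₁, ds₁, hds₁, rfl⟩ := hc'
      simp only [Rig.Hr, Option.map_eq_some_iff] at h
      obtain ⟨f, hf, rfl⟩ := h
      simp only [Lam.H]
      exact ⟨f, ihP _ _ hc hf, ds, hds, rfl⟩

theorem aux_neutral (M : Lam) : ∀ a ∈ Texp M, Rig.rNeutral a = Lam.neutral M := by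
  induction M with
  | var n => rintro a rfl; rfl
  | lam M _ => rintro a ⟨b, _, rfl⟩; rfl
  | app P Q ihP _ =>
    rintro a ⟨c, hc, ds, _, rfl⟩
    simpa [Rig.rNeutral, Lam.neutral] using ihP c hc

theorem aux_hnf (M : Lam) : ∀ a ∈ Texp M, Rig.rIsHNF a → Lam.isHNF M := by
  induction M with
  | var n => intro a _ _; trivial
  | lam M ih => rintro a ⟨b, hb, rfl⟩ h; exact ih b hb h
  | app P Q _ _ =>
    rintro a ⟨c, hc, ds, _, rfl⟩ h
    simp only [Rig.rIsHNF] at h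
    simp only [Lam.isHNF]
    rw [← aux_neutral P c hc, h]

theorem aux_beta (M : Lam) : Lam.H M = M ∨ Lam.Beta M (Lam.H M) := by
  induction M with
  | var n => left; rfl
  | lam M ih =>
    rcases ih with h | h
    · left; simp [Lam.H, h]
    · right; exact Lam.Beta.lam h
  | app P Q ihP _ =>
    cases P with
    | var n => left; rfl
    | lam P => right; exact Lam.Beta.beta P Q
    | app P₁ P₂ =>
      rcases ihP with h | h
      · left; simp only [Lam.H, h]
      · right; simp only [Lam.H]; exact Lam.Beta.appL h

theorem aux_red (m : ℕ) : ∀ M : Lam, Relation.ReflTransGen Lam.Beta M (Lam.H^[m] M) := by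
  induction m with
  | zero => intro M; exact Relation.ReflTransGen.refl
  | succ m ih =>
    intro M
    rw [Function.iterate_succ_apply]
    rcases aux_beta M with h | h
    · rw [h]; exact ih M
    · exact Relation.ReflTransGen.head h (ih _)

theorem aux_none (m : ℕ) : Rig.HrO^[m] none = none := by
  induction m with
  | zero => rfl
  | succ m ih => rw [Function.iterate_succ_apply]; exact ih

theorem aux_iter (m : ℕ) : ∀ (M : Lam) (a b : Rig), a ∈ Texp M →
    Rig.HrO^[m] (some a) = some b → b ∈ Texp (Lam.H^[m] M) := by
  induction m with
  | zero =>
    intro M a b ha h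
    simp only [Function.iterate_zero, id, Option.some.injEq] at h
    subst h
    exact ha
  | succ m ih =>
    intro M a b ha h
    rw [Function.iterate_succ_apply] at h ⊢
    change Rig.HrO^[m] (Rig.Hr a) = some b at h
    cases hc : Rig.Hr a with
    | none => rw [hc, aux_none] at h; simp at h
    | some c =>
      rw [hc] at h
      exact ih _ _ _ (aux_Hr_mem _ _ _ ha hc) h

/-- if some `a ∈ T_r(M)` satisfies that `H_r^m(a)` is a head-normal form
different from `0`, then `H^m(M)` is a head-normal form (so `M` is head-normalizable). -/
theorem head_normalization_of_rigid {M : Lam} {a : Rig} {m : ℕ}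
    (ha : a ∈ Texp M)
    (h : ∃ b : Rig, Rig.HrO^[m] (some a) = some b ∧ Rig.rIsHNF b) :
    Lam.isHNF (Lam.H^[m] M) ∧ Lam.HeadNormalizable M := by
  obtain ⟨b, hb, hn⟩ := h
  have key := aux_hnf _ _ (aux_iter m M a b ha hb) hn
  exact ⟨key, _, aux_red m M, key⟩
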